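/- arXiv:1911.09473 — 9 statements merged into one kernel-verified Lean document; each statement's English description precedes it below -/
import Mathlib

section
/- Let n ≥ 3 be an integer and let (W,R) be a frame such that: (i) there is a world r such that every world of W is reachable from r by the reflexive-transitive closure of R; (ii) every world has at most two R-successors; (iii) every world having an R-predecessor has at most one R-successor; (iv) every world having two distinct R-successors has a dead-end R-successor; (v) r has a dead-end R-successor and there is a dead end e with r R^{n−1} e. Then (W,R) is isomorphic either to the frame F_n, or to the frame C_n whose worlds are pairwise distinct v_1, …, v_n and whose accessibility relation consists exactly of the pairs v_i R v_{i+1} for 1 ≤ i < n together with v_1 R v_n. (An isomorphism of frames is a bijection between the sets of worlds preserving the accessibility relation in both directions.) -/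
/-- `pathRel R k w v` : there is an `R`-path of length exactly `k` from `w` to `v`. -/
def pathRel {W : Type*} (R : W → W → Prop) : ℕ → W → W → Prop
  | 0 => fun w v => w = v
  | k + 1 => fun w v => ∃ u, R w u ∧ pathRel R k u v

/-- A world is a dead end if it sees no world. -/
def DeadEnd {W : Type*} (R : W → W → Prop) (v : W) : Prop := ∀ u, ¬ R v u

/-- The accessibility relation of the frame `F_m`:
worlds are `w_1, …, w_m` (encoded as `Sum.inl i` for `i : Fin m`, `w_{i+1} = Sum.inl i`)
together with `w*` (encoded as `Sum.inr ()`); `w_i R w_{i+1}` for `1 ≤ i < m` and `w_1 R w*`. -/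
def Frel (m : ℕ) : (Fin m ⊕ Unit) → (Fin m ⊕ Unit) → Prop
  | Sum.inl i, Sum.inl j => (j : ℕ) = (i : ℕ) + 1
  | Sum.inl i, Sum.inr _ => (i : ℕ) = 0
  | Sum.inr _, _ => False

/-- The accessibility relation of the frame `C_n`: worlds are `v_1, …, v_n`
(encoded as `Fin n`, `v_{i+1} =` index `i`); `v_i R v_{i+1}` for `1 ≤ i < n` and `v_1 R v_n`. -/
def Crel (n : ℕ) : Fin n → Fin n → Prop :=
  fun i j => (j : ℕ) = (i : ℕ) + 1 ∨ ((i : ℕ) = 0 ∧ (j : ℕ) = n - 1)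

/-!
A path of length `n - 1` from `r` to a dead end, together with a dead end `d` seen by `r`, is a
bounded morphism from `F_n` to `(W, R)`. Indeed the second world of the path is not a dead end, as
`n ≥ 3`, so it differs from `d` and (ii) leaves `r` no further successors; (iii) leaves none to the
later worlds of the path. The image is closed under `R` and contains the root `r`, so it is all of
`W`. The path does not repeat a world, because after a repetition (iii) would force it to be
periodic and it would never reach a dead end. Hence the bounded morphism is an isomorphism unless
the path ends in `d`; in that case it factors through the frame `C_n`, obtained from `F_n` by
identifying `w_n` with `w*`.
-/

open Function Set

section BoundedMorphism

variable {α β γ : Type*} {S : α → α → Prop} {T : β → β → Prop} {R : γ → γ → Prop}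

/-- A bounded morphism (p-morphism) of frames `(α, S) → (β, T)`. The forth and back conditions are
combined: the successors of `φ a` are exactly the images of the successors of `a`. -/
def IsBoundedMorphism (S : α → α → Prop) (T : β → β → Prop) (φ : α → β) : Prop :=
  ∀ a b, T (φ a) b ↔ ∃ a', S a a' ∧ φ a' = b

namespace IsBoundedMorphism

theorem mem_range_of_reflTransGen {φ : α → β} (hφ : IsBoundedMorphism S T φ) {a : α} {b : β}
    (h : Relation.ReflTransGen T (φ a) b) : b ∈ range φ := by
  induction h with
  | refl => exact mem_range_self a
  | tail _ hbc ih =>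
    obtain ⟨a', rfl⟩ := ih
    obtain ⟨a'', -, rfl⟩ := (hφ a' _).1 hbc
    exact mem_range_self a''

theorem rel_iff_of_injective {φ : α → β} (hφ : IsBoundedMorphism S T φ) (hinj : Injective φ)
    (a b : α) : T (φ a) (φ b) ↔ S a b := by
  simp only [hφ a, hinj.eq_iff, exists_eq_right]

theorem exists_equiv_of_bijective {φ : α → β} (hφ : IsBoundedMorphism S T φ)
    (hbij : Bijective φ) : ∃ e : β ≃ α, ∀ b b', T b b' ↔ S (e b) (e b') := by
  refine ⟨(Equiv.ofBijective φ hbij).symm, fun b b' => ?_⟩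
  rw [← hφ.rel_iff_of_injective hbij.injective, Equiv.ofBijective_apply_symm_apply φ hbij,
    Equiv.ofBijective_apply_symm_apply φ hbij]

theorem of_comp_surjective {π : α → β} {ψ : β → γ} (hψπ : IsBoundedMorphism S R (ψ ∘ π))
    (hπ : IsBoundedMorphism S T π) (hsurj : Surjective π) : IsBoundedMorphism T R ψ := by
  intro b c
  obtain ⟨a, rfl⟩ := hsurj b
  constructor
  · intro h
    obtain ⟨a', haa', rfl⟩ := (hψπ a c).1 h
    exact ⟨π a', (hπ a _).2 ⟨a', haa', rfl⟩, rfl⟩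
  · rintro ⟨b', hb', rfl⟩
    obtain ⟨a', haa', rfl⟩ := (hπ a b').1 hb'
    exact (hψπ a _).2 ⟨a', haa', rfl⟩

end IsBoundedMorphism

end BoundedMorphism

/-- The quotient map `F_{k+1} → C_{k+1}` identifying `w*` with `w_{k+1}`. -/
def collapse (k : ℕ) : Fin (k + 1) ⊕ Unit → Fin (k + 1) :=
  Sum.elim id fun _ => Fin.last k

theorem collapse_surjective (k : ℕ) : Surjective (collapse k) :=
  fun i => ⟨Sum.inl i, rfl⟩

theorem isBoundedMorphism_collapse {k : ℕ} (hk : k ≠ 0) :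
    IsBoundedMorphism (Frel (k + 1)) (Crel (k + 1)) (collapse k) := by
  rintro (i | _) j
  · simp only [Sum.exists, Frel, Crel, collapse, Sum.elim_inl, Sum.elim_inr, id_eq,
      exists_eq_right, exists_const, Nat.add_sub_cancel]
    rw [Fin.ext_iff, Fin.val_last, eq_comm (a := k)]
  · have hj := j.isLt
    simp only [Frel, Crel, collapse, Sum.elim_inr, Fin.val_last, false_and, exists_false, iff_false]
    omega

section Chain

variable {W : Type*} {R : W → W → Prop} {k : ℕ} {f : ℕ → W} {d : W}

theorem exists_chain_of_pathRel {w v : W} (h : pathRel R k w v) :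
    ∃ f : ℕ → W, f 0 = w ∧ f k = v ∧ ∀ i < k, R (f i) (f (i + 1)) := by
  induction k generalizing w with
  | zero => exact ⟨fun _ => w, rfl, h, by simp⟩
  | succ k ih =>
    obtain ⟨u, hwu, huv⟩ := h
    obtain ⟨f, rfl, rfl, hf⟩ := ih huv
    refine ⟨fun i => Nat.casesOn i w f, rfl, rfl, ?_⟩
    rintro (_ | i) hi
    · exact hwu
    · exact hf i (by omega)

theorem chain_add_eq_add (hone : ∀ w, (∃ v, R v w) → ∀ u₁ u₂, R w u₁ → R w u₂ → u₁ = u₂)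
    (hf : ∀ i < k, R (f i) (f (i + 1))) {i j m : ℕ} (hij : i < j) (hjm : j + m ≤ k)
    (h : f i = f j) : f (i + m) = f (j + m) := by
  induction m with
  | zero => exact h
  | succ m ih =>
    have heq : f (i + m) = f (j + m) := ih (by omega)
    have hpred : R (f (j + m - 1)) (f (j + m)) := by
      simpa only [Nat.sub_add_cancel (show 1 ≤ j + m by omega)] using hf (j + m - 1) (by omega)
    have hi : R (f (j + m)) (f (i + m + 1)) := heq ▸ hf (i + m) (by omega)
    exact hone _ ⟨_, hpred⟩ _ _ hi (hf (j + m) (by omega))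

theorem chain_injective (hone : ∀ w, (∃ v, R v w) → ∀ u₁ u₂, R w u₁ → R w u₂ → u₁ = u₂)
    (hf : ∀ i < k, R (f i) (f (i + 1))) (hlast : DeadEnd R (f k)) :
    Injective fun i : Fin (k + 1) => f i := by
  have hne : ∀ {i j}, i < j → j ≤ k → f i ≠ f j := by
    intro i j hij hj h
    have hshift : f (i + (k - j)) = f k := by
      simpa only [Nat.add_sub_cancel' hj] using
        chain_add_eq_add hone hf hij (Nat.add_sub_cancel' hj).le h
    exact hlast _ (hshift ▸ hf (i + (k - j)) (by omega))
  intro i j h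
  rcases lt_trichotomy i j with hij | hij | hij
  · exact absurd h (hne hij (Nat.le_of_lt_succ j.isLt))
  · exact hij
  · exact absurd h.symm (hne hij (Nat.le_of_lt_succ i.isLt))

/-- The map `F_{k+1} → W` sending `w_{i+1}` to `f i` and `w*` to `d`. -/
def forkMap (k : ℕ) (f : ℕ → W) (d : W) : Fin (k + 1) ⊕ Unit → W :=
  Sum.elim (fun i => f i) fun _ => d

theorem forkMap_eq_comp_collapse (k : ℕ) (f : ℕ → W) :
    forkMap k f (f k) = (fun i : Fin (k + 1) => f i) ∘ collapse k := by
  ext (_ | _) <;> rfl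

theorem forkMap_injective (hinj : Injective fun i : Fin (k + 1) => f i)
    (hf : ∀ i < k, R (f i) (f (i + 1))) (hd : DeadEnd R d) (hkd : f k ≠ d) :
    Injective (forkMap k f d) := by
  refine hinj.sumElim (injective_of_subsingleton _) fun i _ hid => ?_
  rcases (Nat.le_of_lt_succ i.isLt).lt_or_eq with hi | hi
  · exact hd _ (hid ▸ hf i hi)
  · exact hkd (hi ▸ hid)

theorem isBoundedMorphism_forkMap
    (hone : ∀ w, (∃ v, R v w) → ∀ u₁ u₂, R w u₁ → R w u₂ → u₁ = u₂)
    (hf : ∀ i < k, R (f i) (f (i + 1))) (hlast : DeadEnd R (f k))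
    (hrd : R (f 0) d) (hd : DeadEnd R d) (hr : ∀ w, R (f 0) w → w = f 1 ∨ w = d) :
    IsBoundedMorphism (Frel (k + 1)) R (forkMap k f d) := by
  rintro (⟨i, hi⟩ | _) w
  · constructor
    · intro (h : R (f i) w)
      have hik : i < k := by
        refine (Nat.le_of_lt_succ hi).lt_of_ne ?_
        rintro rfl
        exact hlast w h
      have hnext : w = f (i + 1) ∨ i = 0 ∧ w = d := by
        rcases i with _ | i
        · simpa using hr w h
        · exact .inl (hone _ ⟨_, hf i (by omega)⟩ _ _ h (hf (i + 1) hik))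
      rcases hnext with rfl | ⟨rfl, rfl⟩
      · exact ⟨.inl ⟨i + 1, by omega⟩, rfl, rfl⟩
      · exact ⟨.inr (), rfl, rfl⟩
    · rintro ⟨⟨j, hj⟩ | _, hij, rfl⟩
      · obtain rfl : j = i + 1 := hij
        exact hf i (by omega)
      · obtain rfl : i = 0 := hij
        exact hrd
  · simpa [Frel, forkMap] using hd w

end Chain

theorem stmt0 {W : Type*} [Nonempty W] (R : W → W → Prop) (n : ℕ) (hn : 3 ≤ n)
    (r : W)
    -- (i) every world is reachable from `r` by the reflexive-transitive closure of `R`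
    (hroot : ∀ w : W, Relation.ReflTransGen R r w)
    -- (ii) every world has at most two `R`-successors
    (htwo : ∀ w v₁ v₂ v₃ : W, R w v₁ → R w v₂ → R w v₃ → v₁ = v₂ ∨ v₁ = v₃ ∨ v₂ = v₃)
    -- (iii) every world having an `R`-predecessor has at most one `R`-successor
    (hone : ∀ w : W, (∃ v, R v w) → ∀ u₁ u₂, R w u₁ → R w u₂ → u₁ = u₂)
    -- (iv) every world having two distinct `R`-successors has a dead-end `R`-successor
    (hde : ∀ w v₁ v₂ : W, R w v₁ → R w v₂ → v₁ ≠ v₂ → ∃ v, R w v ∧ DeadEnd R v)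
    -- (v) `r` has a dead-end `R`-successor and sees a dead end in exactly `n - 1` steps
    (hr₁ : ∃ v, R r v ∧ DeadEnd R v)
    (hr₂ : ∃ e, pathRel R (n - 1) r e ∧ DeadEnd R e) :
    (∃ e : W ≃ (Fin n ⊕ Unit), ∀ a b : W, R a b ↔ Frel n (e a) (e b)) ∨
    (∃ e : W ≃ Fin n, ∀ a b : W, R a b ↔ Crel n (e a) (e b)) := by
  obtain ⟨k, rfl⟩ : ∃ k, n = k + 1 := Nat.exists_eq_add_of_le' (by omega)
  obtain ⟨d, hrd, hd⟩ := hr₁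
  obtain ⟨_, hpath, hlast⟩ := hr₂
  obtain ⟨f, rfl, rfl, hf⟩ := exists_chain_of_pathRel hpath
  simp only [Nat.add_sub_cancel] at hf hlast
  have hr01 : R (f 0) (f 1) := hf 0 (by omega)
  have h1d : f 1 ≠ d := fun h => hd (f 2) (h ▸ hf 1 (by omega))
  have hφ : IsBoundedMorphism (Frel (k + 1)) R (forkMap k f d) :=
    isBoundedMorphism_forkMap hone hf hlast hrd hd fun w hw =>
      (htwo _ _ _ _ hw hr01 hrd).imp_right (·.resolve_right h1d)
  have hsurj : Surjective (forkMap k f d) := fun w =>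
    hφ.mem_range_of_reflTransGen (a := .inl 0) (hroot w)
  have hinj : Injective fun i : Fin (k + 1) => f i := chain_injective hone hf hlast
  by_cases hkd : f k = d
  · right
    subst hkd
    rw [forkMap_eq_comp_collapse] at hφ hsurj
    exact (hφ.of_comp_surjective (isBoundedMorphism_collapse (by omega))
      (collapse_surjective k)).exists_equiv_of_bijective ⟨hinj, hsurj.of_comp⟩
  · left
    exact hφ.exists_equiv_of_bijective ⟨forkMap_injective hinj hf hd hkd, hsurj⟩
end

section
/- Let N ≥ 3 be an integer and let (W,R) be a frame such that: (i) every world has at most two R-successors; (ii) every world having two distinct R-successors has a dead-end R-successor; (iii) for every k ≥ 1 and all worlds v, w, if v R^k w and w satisfies condition B_N, then v R^N v; (iv) for every world w satisfying condition B_N and every world v with w R^N v, one has v = w. Suppose some world u_1 of W satisfies condition B_N. Then there exist pairwise distinct worlds u_1, u_2, …, u_N (with u_1 the given world) such that: u_i R u_{i+1} for 1 ≤ i < N and u_N R u_1; the R-successors of u_1 are exactly u_2 and a single dead end; for each i, every R-successor of u_i is either the next world on the cycle (u_{i+1}, respectively u_1 when i = N) or a dead end; and no world outside {u_1, …, u_N}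 has an R-successor inside {u_1, …, u_N}. -/
/-- Condition `B_n` at a world `w`: `w` has a dead-end successor; `w` sees in exactly `n`
steps a world having a dead-end successor; and for no `k` with `2 ≤ k ≤ n - 1` does `w` see
in exactly `k` steps a world having a dead-end successor. -/
def CondB {W : Type*} (R : W → W → Prop) (n : ℕ) (w : W) : Prop :=
  (∃ v, R w v ∧ DeadEnd R v) ∧
  (∃ v, pathRel R n w v ∧ ∃ u, R v u ∧ DeadEnd R u) ∧
  (∀ k, 2 ≤ k → k ≤ n - 1 → ¬ ∃ v, pathRel R k w v ∧ ∃ u, R v u ∧ DeadEnd R u)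

/-!
By (i) and (ii) a world has at most one successor that is not a dead end, so between worlds that
are not dead ends the frame is the graph of a partial function; let `f` be any total extension of
it. By `B_N` and (iv), `u₁` is a point of period `N` of `f`, and the last clause of `B_N` excludes
every smaller period (a fixed point would also have period `2 < N`). The ring is therefore the
`f`-orbit of `u₁`. A world entering the ring is itself `N`-periodic by (iii), so `f`, iterated from
the point at which it enters, leads back to it along the ring.
-/

section LiveSucc

variable {W : Type*} {R : W → W → Prop} {f : W → W} {w x y z : W} {i k n N : ℕ}

theorem not_deadEnd_of_rel (h : R x y) : ¬ DeadEnd R x := fun hx => hx y h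

theorem not_deadEnd_of_pathRel_of_ne_zero (hk : k ≠ 0) (h : pathRel R k x y) :
    ¬ DeadEnd R x := by
  obtain ⟨k, rfl⟩ := Nat.exists_eq_succ_of_ne_zero hk
  obtain ⟨_, hxu, _⟩ := h
  exact not_deadEnd_of_rel hxu

theorem not_deadEnd_of_pathRel (h : pathRel R k x y) (hy : ¬ DeadEnd R y) : ¬ DeadEnd R x := by
  rcases eq_or_ne k 0 with rfl | hk
  · exact (show x = y from h) ▸ hy
  · exact not_deadEnd_of_pathRel_of_ne_zero hk h

theorem rel_iff_eq_or_eq_of_ne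
    (htwo : ∀ v₁ v₂ v₃ : W, R w v₁ → R w v₂ → R w v₃ → v₁ = v₂ ∨ v₁ = v₃ ∨ v₂ = v₃)
    (hx : R w x) (hy : R w y) (hne : x ≠ y) (v : W) : R w v ↔ v = x ∨ v = y := by
  constructor
  · intro hv
    rcases htwo v x y hv hx hy with h | h | h
    · exact .inl h
    · exact .inr h
    · exact absurd h hne
  · rintro (rfl | rfl)
    · exact hx
    · exact hy

theorem eq_of_rel_of_not_deadEnd
    (htwo : ∀ v₁ v₂ v₃ : W, R w v₁ → R w v₂ → R w v₃ → v₁ = v₂ ∨ v₁ = v₃ ∨ v₂ = v₃)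
    (hde : ∀ v₁ v₂ : W, R w v₁ → R w v₂ → v₁ ≠ v₂ → ∃ v, R w v ∧ DeadEnd R v)
    (hwx : R w x) (hwy : R w y) (hx : ¬ DeadEnd R x) (hy : ¬ DeadEnd R y) : x = y := by
  by_contra hxy
  obtain ⟨d, hwd, hd⟩ := hde x y hwx hwy hxy
  rcases (rel_iff_eq_or_eq_of_ne htwo hwx hwy hxy d).mp hwd with rfl | rfl
  · exact hx hd
  · exact hy hd

/-- `f` is a live-successor function of `R`: whenever `x` has a successor that is not a dead end,
`f x` is the unique such successor. The values of `f` at all other worlds are arbitrary, which lets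
`f` be total and hence be iterated. -/
def IsLiveSucc (R : W → W → Prop) (f : W → W) : Prop :=
  ∀ ⦃x y⦄, R x y → ¬ DeadEnd R y → f x = y

theorem exists_isLiveSucc
    (huniq : ∀ w x y : W, R w x → R w y → ¬ DeadEnd R x → ¬ DeadEnd R y → x = y) :
    ∃ f, IsLiveSucc R f := by
  have hex (w : W) : ∃ z, ∀ y, R w y → ¬ DeadEnd R y → z = y := by
    by_cases h : ∃ x, R w x ∧ ¬ DeadEnd R x
    · obtain ⟨x, hwx, hx⟩ := h
      exact ⟨x, fun y hwy hy => huniq w x y hwx hwy hx hy⟩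
    · exact ⟨w, fun y hwy hy => absurd ⟨y, hwy, hy⟩ h⟩
  choose f hf using hex
  exact ⟨f, hf⟩

namespace IsLiveSucc

theorem pathRel_iterate_of_add (hf : IsLiveSucc R f) (hz : ¬ DeadEnd R z)
    (h : pathRel R (i + k) x z) : pathRel R i x (f^[i] x) ∧ pathRel R k (f^[i] x) z := by
  induction i generalizing x with
  | zero => exact ⟨rfl, by rwa [Nat.zero_add] at h⟩
  | succ i ih =>
    rw [Nat.add_right_comm] at h
    obtain ⟨u, hxu, huz⟩ := h
    obtain rfl := hf hxu (not_deadEnd_of_pathRel huz hz)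
    obtain ⟨hinit, htail⟩ := ih huz
    exact ⟨⟨f x, hxu, hinit⟩, htail⟩

theorem iterate_eq_of_pathRel (hf : IsLiveSucc R f) (hz : ¬ DeadEnd R z)
    (h : pathRel R k x z) : f^[k] x = z :=
  (hf.pathRel_iterate_of_add (k := 0) hz h).2

theorem pathRel_iterate (hf : IsLiveSucc R f) (hz : ¬ DeadEnd R z) (h : pathRel R n x z)
    (hi : i ≤ n) : pathRel R i x (f^[i] x) ∧ pathRel R (n - i) (f^[i] x) z :=
  hf.pathRel_iterate_of_add hz (by rwa [Nat.add_sub_cancel' hi])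

theorem not_deadEnd_iterate (hf : IsLiveSucc R f) (hz : ¬ DeadEnd R z) (h : pathRel R n x z)
    (hi : i ≤ n) : ¬ DeadEnd R (f^[i] x) :=
  not_deadEnd_of_pathRel (hf.pathRel_iterate hz h hi).2 hz

theorem rel_iterate (hf : IsLiveSucc R f) (hz : ¬ DeadEnd R z) (h : pathRel R n x z)
    (hi : i < n) : R (f^[i] x) (f^[i + 1] x) := by
  obtain ⟨k, rfl⟩ := Nat.exists_eq_add_of_lt hi
  obtain ⟨u, hxu, huz⟩ := (hf.pathRel_iterate_of_add (k := k + 1) hz h).2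
  rwa [Function.iterate_succ_apply', hf hxu (not_deadEnd_of_pathRel huz hz)]

theorem minimalPeriod_eq_of_pathRel_self (hf : IsLiveSucc R f) (hN : 3 ≤ N)
    (hloop : pathRel R N w w) (hmin : ∀ k, 2 ≤ k → k < N → ¬ pathRel R k w w) :
    Function.minimalPeriod f w = N := by
  have hw := not_deadEnd_of_pathRel_of_ne_zero (by lia) hloop
  have hper : Function.IsPeriodicPt f N w := hf.iterate_eq_of_pathRel hw hloop
  have hpos := hper.minimalPeriod_pos (by lia)
  have hle := hper.minimalPeriod_le (by lia)
  have no_period (k : ℕ) (h2 : 2 ≤ k) (hkN : k < N) : ¬ Function.IsPeriodicPt f k w := by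
    intro hk
    have hpath := (hf.pathRel_iterate hw hloop hkN.le).1
    rw [hk.eq] at hpath
    exact hmin k h2 hkN hpath
  by_contra hne
  have hp := Function.isPeriodicPt_minimalPeriod f w
  rcases Nat.lt_or_ge (Function.minimalPeriod f w) 2 with hlt | hge
  · have hone : Function.minimalPeriod f w = 1 := by lia
    rw [hone] at hp
    exact no_period 2 le_rfl (by lia) (hp.const_mul 2)
  · exact no_period _ hge (by lia) hp

theorem exists_lt_iterate_eq_of_rel (hf : IsLiveSucc R f) (hN : 0 < N)
    (hw : Function.IsPeriodicPt f N w) (hrel : R x (f^[i] w)) (hlive : ¬ DeadEnd R (f^[i] w))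
    (hx : Function.IsPeriodicPt f N x) : ∃ j < N, x = f^[j] w := by
  obtain ⟨n, rfl⟩ := Nat.exists_eq_add_one.mpr hN
  refine ⟨(n + i) % (n + 1), Nat.mod_lt _ hN, ?_⟩
  calc
    x = f^[n] (f x) := hx.eq.symm
    _ = f^[n] (f^[i] w) := by rw [hf hrel hlive]
    _ = f^[n + i] w := (Function.iterate_add_apply f n i w).symm
    _ = f^[(n + i) % (n + 1)] w := (hw.iterate_mod_apply _).symm

end IsLiveSucc

namespace CondB

theorem not_deadEnd (h : CondB R n w) : ¬ DeadEnd R w := by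
  obtain ⟨⟨_, hrel, _⟩, _⟩ := h
  exact not_deadEnd_of_rel hrel

theorem not_pathRel_self (h : CondB R n w) (hk : 2 ≤ k) (hkn : k < n) : ¬ pathRel R k w w :=
  fun hp => h.2.2 k hk (Nat.le_sub_one_of_lt hkn) ⟨w, hp, h.1⟩

theorem pathRel_self (h : CondB R n w) (heps : ∀ v, pathRel R n w v → v = w) :
    pathRel R n w w := by
  obtain ⟨v, hwv, _⟩ := h.2.1
  exact heps v hwv ▸ hwv

end CondB

end LiveSucc

theorem stmt1 {W : Type*} [Nonempty W] (R : W → W → Prop) (N : ℕ) (hN : 3 ≤ N)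
    -- (i) every world has at most two `R`-successors
    (htwo : ∀ w v₁ v₂ v₃ : W, R w v₁ → R w v₂ → R w v₃ → v₁ = v₂ ∨ v₁ = v₃ ∨ v₂ = v₃)
    -- (ii) every world having two distinct `R`-successors has a dead-end `R`-successor
    (hde : ∀ w v₁ v₂ : W, R w v₁ → R w v₂ → v₁ ≠ v₂ → ∃ v, R w v ∧ DeadEnd R v)
    -- (iii) for every `k ≥ 1`, if `v R^k w` and `w` satisfies `B_N`, then `v R^N v`
    (hdelta : ∀ k, 1 ≤ k → ∀ v w : W, pathRel R k v w → CondB R N w → pathRel R N v v)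
    -- (iv) if `w` satisfies `B_N` and `w R^N v`, then `v = w`
    (heps : ∀ w : W, CondB R N w → ∀ v : W, pathRel R N w v → v = w)
    (u₁ : W) (hu₁ : CondB R N u₁) :
    ∃ u : ℕ → W, u 0 = u₁ ∧
      -- `u 0, …, u (N-1)` are pairwise distinct
      (∀ i j, i < N → j < N → u i = u j → i = j) ∧
      -- they form a cycle: `u_i R u_{i+1}` for `1 ≤ i < N` and `u_N R u_1`
      (∀ i, i < N → R (u i) (u ((i + 1) % N))) ∧
      -- the `R`-successors of `u_1` are exactly `u_2` and a single dead end
      (∃ d : W, DeadEnd R d ∧ d ≠ u 1 ∧ ∀ v : W, R (u 0) v ↔ (v = u 1 ∨ v = d)) ∧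
      -- every successor of `u_i` is the next world on the cycle or a dead end
      (∀ i, i < N → ∀ v : W, R (u i) v → v = u ((i + 1) % N) ∨ DeadEnd R v) ∧
      -- no world outside `{u_1, …, u_N}` sees a world inside `{u_1, …, u_N}`
      (∀ v : W, (∀ i, i < N → v ≠ u i) → ∀ i, i < N → ¬ R v (u i)) := by
  obtain ⟨f, hf⟩ := exists_isLiveSucc fun w _ _ => eq_of_rel_of_not_deadEnd (htwo w) (hde w)
  obtain ⟨d, hud, hd⟩ := hu₁.1
  have hlive := hu₁.not_deadEnd
  have hloop := hu₁.pathRel_self (heps u₁ hu₁)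
  have hper : Function.IsPeriodicPt f N u₁ := hf.iterate_eq_of_pathRel hlive hloop
  have hmin := hf.minimalPeriod_eq_of_pathRel_self hN hloop fun _ => hu₁.not_pathRel_self
  have hstep (i : ℕ) (hi : i < N) := hf.rel_iterate hlive hloop hi
  have hne : f u₁ ≠ d := by
    rintro rfl
    exact hf.not_deadEnd_iterate (i := 1) hlive hloop (by lia) hd
  refine ⟨fun i => f^[i] u₁, rfl, fun i j hi hj => ?_, fun i hi => ?_, ⟨d, hd, hne.symm, ?_⟩,
    fun i _ v hv => ?_, fun v hv i hi hvi => ?_⟩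
  · exact (Function.iterate_eq_iterate_iff_of_lt_minimalPeriod (hmin ▸ hi) (hmin ▸ hj)).mp
  · simpa only [hper.iterate_mod_apply] using hstep i hi
  · exact rel_iff_eq_or_eq_of_ne (htwo u₁) (hstep 0 (by lia)) hud hne
  · simp only [hper.iterate_mod_apply, Function.iterate_succ_apply']
    exact or_iff_not_imp_right.mpr fun hv' => (hf hv hv').symm
  · have hpath := (hf.pathRel_iterate hlive hloop hi.le).2
    have hback := hdelta (N - i + 1) (by lia) v u₁ ⟨_, hvi, hpath⟩ hu₁
    have hvper : Function.IsPeriodicPt f N v :=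
      hf.iterate_eq_of_pathRel (not_deadEnd_of_rel hvi) hback
    obtain ⟨j, hj, rfl⟩ := hf.exists_lt_iterate_eq_of_rel (by lia) hper hvi
      (hf.not_deadEnd_iterate hlive hloop hi.le) hvper
    exact hv j hj rfl
end

section
/- For every L-sentence Φ there exists an integer N ≥ 1 such that for all integers m, m' ≥ N, Φ is true in the structure F_m if and only if Φ is true in the structure F_{m'}. -/
open FirstOrder

/-- A frame `(W, R)` regarded as a structure for the first-order language with equality
whose only non-logical symbol is one binary relation symbol (`Language.graph`). -/
def frameStructure {W : Type*} (R : W → W → Prop) : Language.graph.Structure W where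
  RelMap := fun {n} r x => match n, r with
    | 2, .adj => R (x 0) (x 1)

/-!
A winning strategy for the duplicator in the `k`-round Ehrenfeucht–Fraïssé game shows that two
structures satisfy the same formulas of quantifier rank at most `k`. The worlds
`w*, w_1, …, w_m` are laid out on the integer interval `[0, m]`, with `w*` at `0`, and the
duplicator keeps the differences between chosen points, both endpoints included, equal up to a
threshold. A new point within the threshold of an old one is answered by the same offset; one far
from all old points lies in a gap whose counterpart is also long, and is answered inside that gap.
Each answer halves the threshold, so `2 ^ (k + 1) ≤ m, m'` suffices for `k` rounds.
-/

open FirstOrder.Language.Structure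

section BackAndForth

universe u v

variable {L : FirstOrder.Language.{u, v}} {α M N : Type*}

/-- The quantifier rank of a formula: the maximal nesting depth of its quantifiers. It is the number
of rounds of the Ehrenfeucht–Fraïssé game needed to decide the formula. -/
def quantifierRank : ∀ {n : ℕ}, L.BoundedFormula α n → ℕ
  | _, .falsum => 0
  | _, .equal _ _ => 0
  | _, .rel _ _ => 0
  | _, .imp φ ψ => max (quantifierRank φ) (quantifierRank ψ)
  | _, .all φ => quantifierRank φ + 1

/-- A graded back-and-forth system between two structures, i.e. a strategy for the duplicator in the
Ehrenfeucht–Fraïssé game. A position is the set `S` of pairs chosen so far, and `I k S` guarantees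
that the duplicator can answer `k` more moves from `S`. -/
structure IsBackAndForthSystem (L : FirstOrder.Language.{u, v}) [L.Structure M] [L.Structure N]
    (I : ℕ → Set (M × N) → Prop) : Prop where
  eq_iff {k : ℕ} {S : Set (M × N)} (hS : I k S) {a a' : M} {b b' : N} (h : (a, b) ∈ S)
    (h' : (a', b') ∈ S) : a = a' ↔ b = b'
  relMap_iff {k : ℕ} {S : Set (M × N)} (hS : I k S) {n : ℕ} (R : L.Relations n) {xs : Fin n → M}
    {ys : Fin n → N} (h : ∀ i, (xs i, ys i) ∈ S) : RelMap R xs ↔ RelMap R ys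
  forth {k : ℕ} {S : Set (M × N)} (hS : I (k + 1) S) (a : M) : ∃ b, I k (insert (a, b) S)
  back {k : ℕ} {S : Set (M × N)} (hS : I (k + 1) S) (b : N) : ∃ a, I k (insert (a, b) S)

variable [L.IsRelational] [L.Structure M] [L.Structure N]

theorem term_realize_mem {S : Set (M × N)} {x : α → M} {y : α → N} (h : ∀ i, (x i, y i) ∈ S)
    (t : L.Term α) : (t.realize x, t.realize y) ∈ S := by
  cases t with
  | var i => exact h i
  | func f _ => exact isEmptyElim f

theorem sumElim_snoc_mem_insert {S : Set (M × N)} {v : α → M} {w : α → N} {n : ℕ} {xs : Fin n → M}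
    {ys : Fin n → N} (h : ∀ i, (Sum.elim v xs i, Sum.elim w ys i) ∈ S) (a : M) (b : N)
    (i : α ⊕ Fin (n + 1)) :
    (Sum.elim v (Fin.snoc xs a) i, Sum.elim w (Fin.snoc ys b) i) ∈ insert (a, b) S := by
  rcases i with i | i
  · exact Set.mem_insert_of_mem _ (h (.inl i))
  · induction i using Fin.lastCases with
    | last => simp
    | cast i => simpa using Set.mem_insert_of_mem (a, b) (h (.inr i))

theorem IsBackAndForthSystem.realize_iff {I : ℕ → Set (M × N) → Prop}
    (hI : IsBackAndForthSystem L I) {n : ℕ} (φ : L.BoundedFormula α n) {k : ℕ}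
    (hφ : quantifierRank φ ≤ k) {S : Set (M × N)} (hS : I k S) {v : α → M} {w : α → N}
    {xs : Fin n → M} {ys : Fin n → N} (h : ∀ i, (Sum.elim v xs i, Sum.elim w ys i) ∈ S) :
    φ.Realize v xs ↔ φ.Realize w ys := by
  induction φ generalizing k S with
  | falsum => exact Iff.rfl
  | equal t₁ t₂ => exact hI.eq_iff hS (term_realize_mem h t₁) (term_realize_mem h t₂)
  | rel R ts => exact hI.relMap_iff hS R fun i => term_realize_mem h (ts i)
  | imp φ ψ ihφ ihψ =>
    obtain ⟨hφ, hψ⟩ := max_le_iff.1 hφ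
    exact imp_congr (ihφ hφ hS h) (ihψ hψ hS h)
  | all φ ih =>
    obtain ⟨k, rfl⟩ := Nat.exists_eq_add_of_le' (Nat.one_le_of_lt hφ)
    have realize_snoc_iff {a : M} {b : N} (hab : I k (insert (a, b) S)) :
        φ.Realize v (Fin.snoc xs a) ↔ φ.Realize w (Fin.snoc ys b) :=
      ih (Nat.le_of_succ_le_succ hφ) hab (sumElim_snoc_mem_insert h a b)
    constructor
    · intro H b
      obtain ⟨a, hab⟩ := hI.back hS b
      exact (realize_snoc_iff hab).1 (H a)
    · intro H a
      obtain ⟨b, hab⟩ := hI.forth hS a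
      exact (realize_snoc_iff hab).2 (H b)

end BackAndForth

section Distances

/-- Two integers are equal, or both at least `B`, or both at most `-B`: they cannot be told apart
by looking only at distances less than `B` from the origin. -/
def AgreeUpTo (B d e : ℤ) : Prop :=
  d = e ∨ (B ≤ d ∧ B ≤ e) ∨ (d ≤ -B ∧ e ≤ -B)

/-- The correspondence `S` between two sets of integers preserves signed differences up to the
threshold `B`. -/
def PreservesDistUpTo (B : ℤ) (S : Set (ℤ × ℤ)) : Prop :=
  ∀ s ∈ S, ∀ t ∈ S, AgreeUpTo B (s.1 - t.1) (s.2 - t.2)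

namespace PreservesDistUpTo

variable {B C : ℤ} {S : Set (ℤ × ℤ)}

theorem mono (h : B ≤ C) (hS : PreservesDistUpTo C S) : PreservesDistUpTo B S := by
  intro s hs t ht
  have := hS s hs t ht
  unfold AgreeUpTo at *
  lia

theorem image_swap (hS : PreservesDistUpTo B S) : PreservesDistUpTo B (Prod.swap '' S) := by
  rintro _ ⟨s, hs, rfl⟩ _ ⟨t, ht, rfl⟩
  have := hS s hs t ht
  simp only [AgreeUpTo, Prod.fst_swap, Prod.snd_swap] at *
  lia

theorem insert_of_agreeUpTo (hS : PreservesDistUpTo B S) {x y : ℤ}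
    (h : ∀ s ∈ S, AgreeUpTo B (x - s.1) (y - s.2)) : PreservesDistUpTo B (insert (x, y) S) := by
  rintro s (rfl | hs) t (rfl | ht)
  · left; simp
  · exact h t ht
  · have := h s hs
    unfold AgreeUpTo at *
    lia
  · exact hS s hs t ht

theorem agreeUpTo_of_near (hS : PreservesDistUpTo (2 * B) S) {x : ℤ} {s : ℤ × ℤ} (hs : s ∈ S)
    (hx : |x - s.1| < B) : ∀ t ∈ S, AgreeUpTo B (x - t.1) (s.2 + (x - s.1) - t.2) := by
  intro t ht
  have := hS s hs t ht
  rw [abs_lt] at hx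
  unfold AgreeUpTo at *
  lia

theorem exists_agreeUpTo_of_far (hB : 0 < B) (hfin : S.Finite) (hS : PreservesDistUpTo (2 * B) S)
    {x : ℤ} (hlo : ∃ s ∈ S, s.1 ≤ x) (hhi : ∃ s ∈ S, x ≤ s.1) (hfar : ∀ s ∈ S, B ≤ |x - s.1|) :
    ∃ y, ∀ t ∈ S, AgreeUpTo B (x - t.1) (y - t.2) := by
  obtain ⟨l, ⟨hl, hlx⟩, hlmax⟩ :=
    Set.exists_max_image {s ∈ S | s.1 ≤ x} Prod.fst (hfin.sep _) hlo
  obtain ⟨r, ⟨hr, hxr⟩, hrmin⟩ :=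
    Set.exists_min_image {s ∈ S | x ≤ s.1} Prod.fst (hfin.sep _) hhi
  have gap : 2 * B ≤ r.2 - l.2 := by
    have hlr := hS r hr l hl
    have hfl := hfar l hl
    have hfr := hfar r hr
    rw [abs_of_nonneg (by lia)] at hfl
    rw [abs_of_nonpos (by lia)] at hfr
    unfold AgreeUpTo at hlr
    lia
  refine ⟨l.2 + B, fun t ht => ?_⟩
  have hft := hfar t ht
  rcases le_total t.1 x with htx | hxt
  · have htl := hlmax t ⟨ht, htx⟩
    have := hS l hl t ht
    rw [abs_of_nonneg (by lia)] at hft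
    unfold AgreeUpTo at *
    lia
  · have hrt := hrmin t ⟨ht, hxt⟩
    have := hS r hr t ht
    rw [abs_of_nonpos (by lia)] at hft
    unfold AgreeUpTo at *
    lia

theorem exists_insert (hB : 0 < B) (hfin : S.Finite) (hS : PreservesDistUpTo (2 * B) S) {x : ℤ}
    (hlo : ∃ s ∈ S, s.1 ≤ x) (hhi : ∃ s ∈ S, x ≤ s.1) :
    ∃ y, PreservesDistUpTo B (insert (x, y) S) := by
  suffices ∃ y, ∀ t ∈ S, AgreeUpTo B (x - t.1) (y - t.2) from
    this.imp fun _ => (hS.mono (by lia)).insert_of_agreeUpTo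
  by_cases! hnear : ∃ s ∈ S, |x - s.1| < B
  · obtain ⟨s, hs, hx⟩ := hnear
    exact ⟨_, hS.agreeUpTo_of_near hs hx⟩
  · exact hS.exists_agreeUpTo_of_far hB hfin hlo hhi hnear

end PreservesDistUpTo

end Distances

section Frames

variable {m m' k : ℕ}

/-- The position of a world of `F_m` on the integer interval `[0, m]`: the world `w*` is put at `0`,
before `w_1`, and `w_i` at `i`. -/
def pathPos : Fin m ⊕ Unit → ℤ
  | .inl i => i + 1
  | .inr _ => 0

theorem pathPos_injective : Function.Injective (pathPos (m := m)) := by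
  rintro (i | _) (j | _) h <;> simp only [pathPos] at h
  · exact congrArg Sum.inl (Fin.ext (by lia))
  · lia
  · lia
  · rfl

theorem range_pathPos : Set.range (pathPos (m := m)) = Set.Icc 0 (m : ℤ) := by
  ext z
  constructor
  · rintro ⟨i | _, rfl⟩ <;> simp only [pathPos, Set.mem_Icc] <;> omega
  · rintro ⟨h0, hm⟩
    rcases h0.eq_or_lt with rfl | hpos
    · exact ⟨.inr (), rfl⟩
    · exact ⟨.inl ⟨(z - 1).toNat, by lia⟩, by simp only [pathPos]; lia⟩

theorem frel_iff_pathPos {x y : Fin m ⊕ Unit} :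
    Frel m x y ↔
      (1 ≤ pathPos x ∧ pathPos y = pathPos x + 1) ∨ (pathPos x = 1 ∧ pathPos y = 0) := by
  rcases x with i | _ <;> rcases y with j | _ <;> simp only [Frel, pathPos] <;> lia

local instance frelStructure (m : ℕ) : Language.graph.Structure (Fin m ⊕ Unit) :=
  frameStructure (Frel m)

/-- The pairs of path positions to be matched at a game position `S` between `F_m` and `F_m'`: those
of the chosen worlds, and the endpoints `(0, 0)` and `(m, m')`. -/
def matchedPos (S : Set ((Fin m ⊕ Unit) × (Fin m' ⊕ Unit))) : Set (ℤ × ℤ) :=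
  insert (0, 0) (insert ((m : ℤ), (m' : ℤ)) (Prod.map pathPos pathPos '' S))

/-- The invariant kept by the duplicator between `F_m` and `F_m'` with `k` rounds to go. The
threshold `2 ^ (k + 1)` doubles with each round to go and is `2` at the end of the game, where
differences of `1` must still be recognised. -/
def IsGoodPosition (k : ℕ) (S : Set ((Fin m ⊕ Unit) × (Fin m' ⊕ Unit))) : Prop :=
  S.Finite ∧ PreservesDistUpTo (2 ^ (k + 1)) (matchedPos S)

variable {S : Set ((Fin m ⊕ Unit) × (Fin m' ⊕ Unit))}

theorem pathPos_mem_matchedPos {x : Fin m ⊕ Unit} {y : Fin m' ⊕ Unit} (h : (x, y) ∈ S) :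
    (pathPos x, pathPos y) ∈ matchedPos S :=
  .inr (.inr ⟨(x, y), h, rfl⟩)

theorem matchedPos_insert (x : Fin m ⊕ Unit) (y : Fin m' ⊕ Unit) :
    matchedPos (insert (x, y) S) = insert (pathPos x, pathPos y) (matchedPos S) := by
  simp only [matchedPos, Set.image_insert_eq, Prod.map_apply, Set.insert_comm (pathPos x, _)]

theorem matchedPos_image_swap : matchedPos (Prod.swap '' S) = Prod.swap '' matchedPos S := by
  simp only [matchedPos, Set.image_insert_eq, Set.image_image, Prod.map_apply', Prod.swap]

theorem isGoodPosition_empty (hm : 2 ^ (k + 1) ≤ m) (hm' : 2 ^ (k + 1) ≤ m') :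
    IsGoodPosition k (∅ : Set ((Fin m ⊕ Unit) × (Fin m' ⊕ Unit))) := by
  refine ⟨Set.finite_empty, ?_⟩
  zify at hm hm'
  simp only [PreservesDistUpTo, matchedPos, Set.image_empty]
  rintro _ (rfl | rfl | ⟨⟨⟩⟩) _ (rfl | rfl | ⟨⟨⟩⟩) <;> simp only [AgreeUpTo] <;> lia

namespace IsGoodPosition

theorem agreeUpTo_two (hS : IsGoodPosition k S) {s t : ℤ × ℤ} (hs : s ∈ matchedPos S)
    (ht : t ∈ matchedPos S) : AgreeUpTo 2 (s.1 - t.1) (s.2 - t.2) :=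
  hS.2.mono (le_self_pow₀ one_le_two k.succ_ne_zero) s hs t ht

theorem image_swap (hS : IsGoodPosition k S) : IsGoodPosition k (Prod.swap '' S) :=
  ⟨hS.1.image _, matchedPos_image_swap ▸ hS.2.image_swap⟩

theorem eq_iff (hS : IsGoodPosition k S) {a a' : Fin m ⊕ Unit} {b b' : Fin m' ⊕ Unit}
    (h : (a, b) ∈ S) (h' : (a', b') ∈ S) : a = a' ↔ b = b' := by
  have := hS.agreeUpTo_two (pathPos_mem_matchedPos h) (pathPos_mem_matchedPos h')
  rw [← pathPos_injective.eq_iff, ← pathPos_injective.eq_iff (a := b)]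
  unfold AgreeUpTo at this
  lia

theorem frel_iff (hS : IsGoodPosition k S) {a a' : Fin m ⊕ Unit} {b b' : Fin m' ⊕ Unit}
    (h : (a, b) ∈ S) (h' : (a', b') ∈ S) : Frel m a a' ↔ Frel m' b b' := by
  have zero_mem : ((0, 0) : ℤ × ℤ) ∈ matchedPos S := .inl rfl
  have step := hS.agreeUpTo_two (pathPos_mem_matchedPos h') (pathPos_mem_matchedPos h)
  have source := hS.agreeUpTo_two (pathPos_mem_matchedPos h) zero_mem
  have target := hS.agreeUpTo_two (pathPos_mem_matchedPos h') zero_mem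
  rw [frel_iff_pathPos, frel_iff_pathPos]
  simp only [AgreeUpTo] at step source target
  omega

theorem forth (hS : IsGoodPosition (k + 1) S) (a : Fin m ⊕ Unit) :
    ∃ b, IsGoodPosition k (insert (a, b) S) := by
  obtain ⟨hfin, hdist⟩ := hS
  have zero_mem : ((0, 0) : ℤ × ℤ) ∈ matchedPos S := .inl rfl
  have end_mem : ((m : ℤ), (m' : ℤ)) ∈ matchedPos S := .inr (.inl rfl)
  have ha : pathPos a ∈ Set.Icc 0 (m : ℤ) := range_pathPos ▸ Set.mem_range_self a
  have hpow : (0 : ℤ) < 2 ^ (k + 1) := by positivity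
  rw [pow_succ' _ (k + 1)] at hdist
  obtain ⟨y, hy⟩ := hdist.exists_insert hpow (((hfin.image _).insert _).insert _)
    ⟨_, zero_mem, ha.1⟩ ⟨_, end_mem, ha.2⟩
  have y_mem : y ∈ Set.Icc 0 (m' : ℤ) := by
    have from_start := hy _ (Set.mem_insert _ _) _ (Set.mem_insert_of_mem _ zero_mem)
    have to_end := hy _ (Set.mem_insert _ _) _ (Set.mem_insert_of_mem _ end_mem)
    simp only [AgreeUpTo, Set.mem_Icc] at *
    lia
  obtain ⟨b, rfl⟩ := range_pathPos.ge y_mem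
  exact ⟨b, hfin.insert _, (matchedPos_insert a b).symm ▸ hy⟩

theorem back (hS : IsGoodPosition (k + 1) S) (b : Fin m' ⊕ Unit) :
    ∃ a, IsGoodPosition k (insert (a, b) S) := by
  obtain ⟨a, ha⟩ := hS.image_swap.forth b
  refine ⟨a, ?_⟩
  simpa only [Set.image_insert_eq, Set.image_image, Prod.swap_prod_mk, Prod.swap_swap,
    Set.image_id'] using ha.image_swap

end IsGoodPosition

theorem isBackAndForthSystem_isGoodPosition :
    IsBackAndForthSystem Language.graph (IsGoodPosition (m := m) (m' := m')) where
  eq_iff hS := hS.eq_iff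
  relMap_iff hS _ R _ _ h := by
    cases R
    exact hS.frel_iff (h 0) (h 1)
  forth hS := hS.forth
  back hS := hS.back

theorem realize_frel_iff_of_quantifierRank_le {Φ : Language.graph.Sentence}
    (hΦ : quantifierRank Φ ≤ k) (hm : 2 ^ (k + 1) ≤ m) (hm' : 2 ^ (k + 1) ≤ m') :
    Φ.Realize (Fin m ⊕ Unit) ↔ Φ.Realize (Fin m' ⊕ Unit) :=
  isBackAndForthSystem_isGoodPosition.realize_iff Φ hΦ (isGoodPosition_empty hm hm') (by simp)

end Frames

theorem stmt2 (Φ : Language.graph.Sentence) :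
    ∃ N : ℕ, 1 ≤ N ∧ ∀ m m' : ℕ, N ≤ m → N ≤ m' →
      (@FirstOrder.Language.Sentence.Realize Language.graph (Fin m ⊕ Unit) (frameStructure (Frel m)) Φ ↔
       @FirstOrder.Language.Sentence.Realize Language.graph (Fin m' ⊕ Unit) (frameStructure (Frel m')) Φ) :=
  ⟨2 ^ (quantifierRank Φ + 1), Nat.one_le_two_pow, fun _ _ hm hm' =>
    realize_frel_iff_of_quantifierRank_le le_rfl hm hm'⟩
end

section
/- For every integer n ≥ 1: n is even if and only if for every even integer m ≥ 2 and every world w of the frame F_m, it is not the case that w has a dead-end R-successor and there exists a dead end v with w R^n v. -/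
/-!
For `m ≥ 2` the dead ends of `F_m` are `w_m` and `w*`, so only `w_{m-1}` and `w_1` see a dead end.
Every path out of `w_{m-1}` to a dead end has length `1`; the paths from `w_1` to a dead end are the
step to `w*`, of length `1`, and the chain to `w_m`, of length `m - 1`. Hence `α_n` is satisfiable
in `F_m` exactly when `n = 1` or `n = m - 1`, and both values are odd when `m` is even.
-/

section General

variable {W : Type*} {R : W → W → Prop}

/-- The world `w` satisfies `◇ᵏ□⊥`: some path of length exactly `k` leads from `w` to a dead end. -/
def ReachesDeadEnd (R : W → W → Prop) (k : ℕ) (w : W) : Prop :=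
  ∃ v, pathRel R k w v ∧ DeadEnd R v

/-- The world `w` satisfies `α_n = ◇□⊥ ∧ ◇ⁿ□⊥`. The first conjunct is written with `R`
itself, not as `ReachesDeadEnd R 1 w`, so that the whole unfolds to the condition in `stmt5`. -/
def SatisfiesAlpha (R : W → W → Prop) (n : ℕ) (w : W) : Prop :=
  (∃ v, R w v ∧ DeadEnd R v) ∧ ReachesDeadEnd R n w

theorem reachesDeadEnd_zero_iff {w : W} : ReachesDeadEnd R 0 w ↔ DeadEnd R w := by
  simp only [ReachesDeadEnd, pathRel, exists_eq_left']

theorem reachesDeadEnd_succ_iff {k : ℕ} {w : W} :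
    ReachesDeadEnd R (k + 1) w ↔ ∃ u, R w u ∧ ReachesDeadEnd R k u := by
  constructor
  · rintro ⟨v, ⟨u, hwu, huv⟩, hv⟩
    exact ⟨u, hwu, v, huv, hv⟩
  · rintro ⟨u, hwu, v, huv, hv⟩
    exact ⟨v, ⟨u, hwu, huv⟩, hv⟩

theorem satisfiesAlpha_iff {n : ℕ} {w : W} :
    SatisfiesAlpha R n w ↔ ReachesDeadEnd R 1 w ∧ ReachesDeadEnd R n w := by
  simp only [SatisfiesAlpha, reachesDeadEnd_succ_iff, reachesDeadEnd_zero_iff]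

end General

section Frel

variable {m : ℕ}

theorem deadEnd_frel_inr (u : Unit) : DeadEnd (Frel m) (Sum.inr u) :=
  fun _ h => h

theorem deadEnd_frel_inl_iff (hm : 2 ≤ m) {i : Fin m} :
    DeadEnd (Frel m) (Sum.inl i) ↔ (i : ℕ) + 1 = m := by
  constructor
  · intro h
    by_contra hne
    exact h (Sum.inl ⟨i + 1, by omega⟩) rfl
  · rintro hi (j | u) hR
    · have hj : (j : ℕ) = i + 1 := hR
      omega
    · have hi₀ : (i : ℕ) = 0 := hR
      omega

theorem reachesDeadEnd_frel_inr_iff {k : ℕ} {u : Unit} :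
    ReachesDeadEnd (Frel m) k (Sum.inr u) ↔ k = 0 := by
  cases k with
  | zero => simpa only [reachesDeadEnd_zero_iff, iff_true] using deadEnd_frel_inr u
  | succ k => simp only [reachesDeadEnd_succ_iff, Frel, false_and, exists_false, k.succ_ne_zero]

theorem reachesDeadEnd_succ_frel_inl_iff {k : ℕ} {i : Fin m} :
    ReachesDeadEnd (Frel m) (k + 1) (Sum.inl i) ↔
      (∃ j : Fin m, (j : ℕ) = i + 1 ∧ ReachesDeadEnd (Frel m) k (Sum.inl j)) ∨
        ((i : ℕ) = 0 ∧ k = 0) := by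
  simp only [reachesDeadEnd_succ_iff, Sum.exists, Frel, reachesDeadEnd_frel_inr_iff, exists_const]

theorem reachesDeadEnd_frel_inl_iff (hm : 2 ≤ m) {k : ℕ} {i : Fin m} :
    ReachesDeadEnd (Frel m) k (Sum.inl i) ↔ (i : ℕ) + k + 1 = m ∨ ((i : ℕ) = 0 ∧ k = 1) := by
  induction k generalizing i with
  | zero =>
    rw [reachesDeadEnd_zero_iff, deadEnd_frel_inl_iff hm]
    omega
  | succ k ih =>
    simp only [reachesDeadEnd_succ_frel_inl_iff, ih]
    constructor
    · rintro (⟨j, hj, hjk⟩ | hi)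
      · left; omega
      · right; omega
    · rintro (hik | hi)
      · exact Or.inl ⟨⟨i + 1, by omega⟩, rfl, Or.inl (by dsimp only; omega)⟩
      · right; omega

theorem exists_satisfiesAlpha_frel_iff (hm : 2 ≤ m) {n : ℕ} :
    (∃ w, SatisfiesAlpha (Frel m) n w) ↔ n = 1 ∨ n + 1 = m := by
  simp only [satisfiesAlpha_iff, Sum.exists, reachesDeadEnd_frel_inl_iff hm,
    reachesDeadEnd_frel_inr_iff, one_ne_zero, and_true, false_and, exists_false, or_false]
  constructor
  · rintro ⟨i, hone, hn⟩
    omega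
  · intro hnm
    exact ⟨⟨0, by omega⟩, Or.inr rfl, by dsimp only; omega⟩

end Frel

theorem stmt5 (n : ℕ) (hn : 1 ≤ n) :
    Even n ↔
      ∀ m : ℕ, 2 ≤ m → Even m → ∀ w : Fin m ⊕ Unit,
        ¬ ((∃ v, Frel m w v ∧ DeadEnd (Frel m) v) ∧
           (∃ v, pathRel (Frel m) n w v ∧ DeadEnd (Frel m) v)) := by
  constructor
  · intro hn_even m hm hm_even w hw
    have hnm : n = 1 ∨ n + 1 = m := (exists_satisfiesAlpha_frel_iff hm).mp ⟨w, hw⟩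
    obtain rfl | rfl := hnm
    · exact Nat.not_even_one hn_even
    · exact Nat.even_add_one.mp hm_even hn_even
  · intro h
    by_contra hn_odd
    have hm : 2 ≤ n + 1 := Nat.succ_le_succ hn
    obtain ⟨w, hw⟩ := (exists_satisfiesAlpha_frel_iff hm).mpr (Or.inr rfl)
    exact h (n + 1) hm (Nat.even_add_one.mpr hn_odd) w hw
end

section
/- For every integer n ≥ 1: n is odd if and only if for every even integer m ≥ 2, no world of the frame G_m satisfies condition B_n. -/
/-- The accessibility relation of the frame `G_m`:
worlds are `w_1, …, w_m` (encoded as `Sum.inl i` for `i : Fin m`, `w_{i+1} = Sum.inl i`)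
together with `w*` (encoded as `Sum.inr ()`); `w_i R w_{i+1}` for `1 ≤ i < m`,
`w_m R w_1`, and `w_1 R w*`. -/
def Grel (m : ℕ) : (Fin m ⊕ Unit) → (Fin m ⊕ Unit) → Prop
  | Sum.inl i, Sum.inl j => (j : ℕ) = (i : ℕ) + 1 ∨ ((i : ℕ) = m - 1 ∧ (j : ℕ) = 0)
  | Sum.inl i, Sum.inr _ => (i : ℕ) = 0
  | Sum.inr _, _ => False

/-!
In `G_m` the only dead end is `w*`, so the only world with a dead-end successor is `w_1`. The other
worlds form a directed `m`-cycle, so `w_1` reaches itself in exactly `k` steps if and only if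
`m ∣ k`. Hence, for `m ≥ 2` and `n ≥ 1`, condition `B_n` says that `w = w_1` and that the least
positive multiple of `m` is `n`, that is, `n = m`.
-/

theorem DeadEnd.eq_of_pathRel {W : Type*} {R : W → W → Prop} {k : ℕ} {w v : W}
    (hw : DeadEnd R w) (h : pathRel R k w v) : w = v := by
  cases k with
  | zero => exact h
  | succ k =>
    obtain ⟨u, hu, -⟩ := h
    exact absurd hu (hw u)

namespace Grel

variable {m : ℕ}

theorem deadEnd_inr (x : Unit) : DeadEnd (Grel m) (.inr x) := fun _ h => h

variable [NeZero m]

theorem inl_inl_iff {i j : Fin m} : Grel m (.inl i) (.inl j) ↔ j = i + 1 := by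
  have hi : (i : ℕ) < m := i.isLt
  change (j : ℕ) = i + 1 ∨ (i : ℕ) = m - 1 ∧ (j : ℕ) = 0 ↔ j = i + 1
  rw [Fin.ext_iff, Fin.val_add, Fin.val_one', Nat.add_mod_mod]
  obtain hlt | hlast : (i : ℕ) + 1 < m ∨ (i : ℕ) + 1 = m := by omega
  · rw [Nat.mod_eq_of_lt hlt]
    omega
  · rw [hlast, Nat.mod_self]
    omega

theorem deadEnd_iff {v : Fin m ⊕ Unit} : DeadEnd (Grel m) v ↔ v = .inr () := by
  constructor
  · intro hv
    cases v with
    | inl i => exact absurd (inl_inl_iff.mpr rfl) (hv (.inl (i + 1)))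
    | inr _ => rfl
  · rintro rfl
    exact deadEnd_inr ()

theorem exists_deadEnd_iff {w : Fin m ⊕ Unit} :
    (∃ v, Grel m w v ∧ DeadEnd (Grel m) v) ↔ w = .inl 0 := by
  simp only [deadEnd_iff, exists_eq_right]
  cases w with
  | inl i => simp only [Grel, Sum.inl.injEq, Fin.ext_iff, Fin.val_zero]
  | inr _ => simp only [Grel, reduceCtorEq]

theorem pathRel_inl_inl_iff {k : ℕ} {i j : Fin m} :
    pathRel (Grel m) k (.inl i) (.inl j) ↔ j = i + k • 1 := by
  induction k generalizing i with
  | zero => simp only [pathRel, Sum.inl.injEq, zero_nsmul, add_zero, eq_comm]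
  | succ k ih =>
    rw [succ_nsmul', ← add_assoc, ← ih]
    constructor
    · rintro ⟨u | u, hu, hpath⟩
      · rwa [← inl_inl_iff.mp hu]
      · cases (deadEnd_inr u).eq_of_pathRel hpath
    · exact fun hpath => ⟨.inl (i + 1), inl_inl_iff.mpr rfl, hpath⟩

theorem pathRel_inl_self_iff {k : ℕ} {i : Fin m} :
    pathRel (Grel m) k (.inl i) (.inl i) ↔ m ∣ k := by
  open scoped Fin.NatCast in
  rw [pathRel_inl_inl_iff, left_eq_add, nsmul_one, Fin.natCast_eq_zero]

theorem exists_pathRel_deadEnd_iff {k : ℕ} :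
    (∃ v, pathRel (Grel m) k (.inl 0) v ∧ ∃ u, Grel m v u ∧ DeadEnd (Grel m) u) ↔ m ∣ k := by
  simp only [exists_deadEnd_iff, exists_eq_right, pathRel_inl_self_iff]

theorem condB_iff (hm : m ≠ 1) {n : ℕ} (hn : n ≠ 0) {w : Fin m ⊕ Unit} :
    CondB (Grel m) n w ↔ w = .inl 0 ∧ n = m := by
  have hm0 : m ≠ 0 := NeZero.ne m
  rw [CondB, exists_deadEnd_iff]
  refine and_congr_right ?_
  rintro rfl
  simp only [exists_pathRel_deadEnd_iff]
  constructor
  · rintro ⟨hdvd, hmin⟩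
    have hle : m ≤ n := Nat.le_of_dvd (Nat.pos_of_ne_zero hn) hdvd
    have hnlt : ¬ m ≤ n - 1 := fun hlt => hmin m (by omega) hlt dvd_rfl
    omega
  · rintro rfl
    exact ⟨dvd_rfl, fun k hk hkn => Nat.not_dvd_of_pos_of_lt (by omega) (by omega)⟩

end Grel

theorem Grel.exists_condB_iff {m n : ℕ} (hm : 2 ≤ m) (hn : n ≠ 0) :
    (∃ w, CondB (Grel m) n w) ↔ n = m := by
  have : NeZero m := ⟨by omega⟩
  simp only [condB_iff (show m ≠ 1 by omega) hn, exists_eq_left]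

theorem stmt6 (n : ℕ) (hn : 1 ≤ n) :
    Odd n ↔
      ∀ m : ℕ, 2 ≤ m → Even m → ∀ w : Fin m ⊕ Unit, ¬ CondB (Grel m) n w := by
  have hn0 : n ≠ 0 := Nat.one_le_iff_ne_zero.mp hn
  constructor
  · intro hodd m hm heven w hw
    obtain rfl : n = m := (Grel.exists_condB_iff hm hn0).mp ⟨w, hw⟩
    exact Nat.not_even_iff_odd.mpr hodd heven
  · intro hno
    by_contra hodd
    have heven : Even n := Nat.not_odd_iff_even.mp hodd
    have hn2 : 2 ≤ n := Nat.le_of_dvd hn heven.two_dvd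
    obtain ⟨w, hw⟩ := (Grel.exists_condB_iff hn2 hn0).mpr rfl
    exact hno n hn2 heven w hw
end

section
/- For every frame (W,R), the following are equivalent: (1) for every predicate P : W → Prop and every world w ∈ W, either w has a dead-end R-successor, or (if some R-successor of w satisfies P, then every R-successor of w satisfies P); (2) every world of W having two distinct R-successors has a dead-end R-successor. -/
theorem set_subsingleton_iff_forall_exists_imp_forall {α : Type*} {s : Set α} :
    s.Subsingleton ↔ ∀ P : α → Prop, (∃ x ∈ s, P x) → ∀ x ∈ s, P x := by
  constructor
  · rintro hs P ⟨x, hx, hPx⟩ y hy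
    exact hs hx hy ▸ hPx
  · intro h x hx y hy
    exact h (x = ·) ⟨x, hx, rfl⟩ y hy

theorem forall_or_exists_imp_forall_iff_nontrivial_imp {α : Type*} {s : Set α} {A : Prop} :
    (∀ P : α → Prop, A ∨ ((∃ x ∈ s, P x) → ∀ x ∈ s, P x)) ↔ (s.Nontrivial → A) :=
  calc
    _ ↔ A ∨ ∀ P : α → Prop, (∃ x ∈ s, P x) → ∀ x ∈ s, P x := forall_or_left
    _ ↔ A ∨ s.Subsingleton := by rw [set_subsingleton_iff_forall_exists_imp_forall]
    _ ↔ (s.Nontrivial → A) := by rw [or_comm, ← Set.not_nontrivial_iff, imp_iff_not_or]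

theorem stmt9 {W : Type*} [Nonempty W] (R : W → W → Prop) :
    -- (1) validity of `γ = ◇□⊥ ∨ (◇p → □p)` on the frame `(W, R)`
    (∀ P : W → Prop, ∀ w : W,
        (∃ v, R w v ∧ DeadEnd R v) ∨ ((∃ v, R w v ∧ P v) → ∀ v, R w v → P v)) ↔
    -- (2) every world having two distinct successors has a dead-end successor
    (∀ w v₁ v₂ : W, R w v₁ → R w v₂ → v₁ ≠ v₂ → ∃ v, R w v ∧ DeadEnd R v) := by
  rw [forall_comm]
  refine forall_congr' fun w => ?_
  let successors : Set W := {v | R w v}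
  let seesDeadEnd : Prop := ∃ v, R w v ∧ DeadEnd R v
  calc
    _ ↔ (successors.Nontrivial → seesDeadEnd) := forall_or_exists_imp_forall_iff_nontrivial_imp
    _ ↔ ∀ v₁ v₂, R w v₁ → R w v₂ → v₁ ≠ v₂ → seesDeadEnd :=
      ⟨fun h v₁ v₂ h₁ h₂ hne => h ⟨v₁, h₁, v₂, h₂, hne⟩,
        fun h ⟨v₁, h₁, v₂, h₂, hne⟩ => h v₁ v₂ h₁ h₂ hne⟩
end

section
/- For every even integer n ≥ 2, the frame F*_n, with distinguished world w_1, satisfies conditions (Φ1)–(Φ4). -/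
/-- The set of worlds of the frame `F*_n`: the worlds of `F_n` together with, for each even
`i` with `2 ≤ i ≤ n`, a new world `w*_i` (encoded as `Sum.inr ⟨j, _⟩` with `j = i - 1` odd). -/
def FSW (n : ℕ) : Type := (Fin n ⊕ Unit) ⊕ {j : Fin n // Odd (j : ℕ)}

/-- The accessibility relation of the frame `F*_n`: that of `F_n` together with the
single additional pair `w*_i R w_i` for each even `i` with `2 ≤ i ≤ n`. -/
def FSrel (n : ℕ) : FSW n → FSW n → Prop
  | Sum.inl a, Sum.inl b => Frel n a b
  | Sum.inr j, Sum.inl (Sum.inl i) => i = j.1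
  | _, _ => False

/-- Condition (Φ1): `R` is irreflexive and there are no `x, y, z` with
`x R y`, `y R z` and `x R z`. -/
def Phi1 {W : Type*} (R : W → W → Prop) : Prop :=
  (∀ x, ¬ R x x) ∧ (∀ x y z, R x y → R y z → ¬ R x z)

/-- Condition (Φ2) at the distinguished world `w₁`. -/
def Phi2 {W : Type*} (R : W → W → Prop) (w₁ : W) : Prop :=
  ∃ ws w₂ w₂s : W,
    (∀ x, R w₁ x ↔ (x = ws ∨ x = w₂)) ∧ ws ≠ w₂ ∧
    R w₂s w₂ ∧ (¬ ∃ x, R x w₁) ∧ (¬ ∃ x, R x w₂s) ∧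
    (∀ x, R x ws → x = w₁) ∧ (¬ ∃ x, R ws x) ∧ w₁ ≠ w₂s

/-- Condition (Φ3) at the distinguished world `w₁`: every world other than `w₁` has at most
one `R`-successor, and no world has three pairwise distinct `R`-predecessors. -/
def Phi3 {W : Type*} (R : W → W → Prop) (w₁ : W) : Prop :=
  (∀ x, x ≠ w₁ → ∀ y z, R x y → R x z → y = z) ∧
  (∀ w, ¬ ∃ x y z, x ≠ y ∧ y ≠ z ∧ x ≠ z ∧ R x w ∧ R y w ∧ R z w)

/-- Condition (Φ4). -/
def Phi4 {W : Type*} (R : W → W → Prop) : Prop :=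
  ∀ w, (∃ y z, y ≠ z ∧ R y w ∧ R z w) →
    ((¬ ∃ x, R w x) ∨
      ∃ x y z, R w y ∧ R y x ∧ R z x ∧ y ≠ z ∧ x ≠ w ∧
        (∀ u, R u y → u = w) ∧ ¬ ∃ u, R u z)

/-! The frame `F*_n` is graded: put `w_i` at level `i - 1`, `w*` at level `1` and `w*_i` at level
`i - 2`, so that every step raises the level by one; this yields (Φ1). Deleting the worlds `w*_i`
leaves a tree, and each world has at most one `w*_i` among its predecessors. So a world has at most
two predecessors, and it has two only if it is some `w_i` with `i` even. If such a `w_i` has a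
successor, then `i + 2 ≤ n` since `n` is even, and `w_{i+1}`, `w_{i+2}`, `w*_{i+2}` witness (Φ4). -/

theorem Phi1.of_grading {W : Type*} {R : W → W → Prop} (d : W → ℤ)
    (hd : ∀ x y, R x y → d y = d x + 1) : Phi1 R := by
  refine ⟨fun x hxx => ?_, fun x y z hxy hyz hxz => ?_⟩
  · linarith [hd x x hxx]
  · linarith [hd x y hxy, hd y z hyz, hd x z hxz]

theorem not_pairwise_ne_of_injOn_bool {α : Type*} {s : Set α} {f : α → Bool} (hf : s.InjOn f)
    {x y z : α} (hx : x ∈ s) (hy : y ∈ s) (hz : z ∈ s) : ¬ (x ≠ y ∧ y ≠ z ∧ x ≠ z) := by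
  rintro ⟨hxy, hyz, hxz⟩
  have pigeonhole : ∀ a b c : Bool, a = b ∨ b = c ∨ a = c := by decide
  rcases pigeonhole (f x) (f y) (f z) with h | h | h
  · exact hxy (hf hx hy h)
  · exact hyz (hf hy hz h)
  · exact hxz (hf hx hz h)

namespace FSW

variable {n : ℕ}

/-- The world `w_{i+1}` of `F*_n`; indices start at `0`, as in `Frel`. -/
def path (i : Fin n) : FSW n := Sum.inl (Sum.inl i)

/-- The world `w*` of `F*_n`. -/
def leaf : FSW n := Sum.inl (Sum.inr ())

/-- The world `w*_{j+1}` of `F*_n`, whose only successor is `w_{j+1} = path j`. -/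
def source (j : {j : Fin n // Odd (j : ℕ)}) : FSW n := Sum.inr j

@[elab_as_elim]
theorem cases {motive : FSW n → Prop} (x : FSW n) (path : ∀ i, motive (path i))
    (leaf : motive leaf) (source : ∀ j, motive (source j)) : motive x :=
  match x with
  | Sum.inl (Sum.inl i) => path i
  | Sum.inl (Sum.inr _) => leaf
  | Sum.inr j => source j

theorem path_injective : Function.Injective (path (n := n)) :=
  Sum.inl_injective.comp Sum.inl_injective

@[simp]
theorem path_inj {i j : Fin n} : path i = path j ↔ i = j :=
  path_injective.eq_iff

@[simp]
theorem source_inj {j k : {j : Fin n // Odd (j : ℕ)}} : source j = source k ↔ j = k :=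
  Sum.inr_injective.eq_iff

theorem leaf_ne_path (i : Fin n) : leaf ≠ path i :=
  nofun

theorem path_ne_source (i : Fin n) (j : {j : Fin n // Odd (j : ℕ)}) : path i ≠ source j :=
  nofun

@[simp]
theorem rel_path_path {i j : Fin n} : FSrel n (path i) (path j) ↔ (j : ℕ) = i + 1 :=
  Iff.rfl

@[simp]
theorem rel_path_leaf {i : Fin n} : FSrel n (path i) leaf ↔ (i : ℕ) = 0 :=
  Iff.rfl

@[simp]
theorem rel_source_path {j : {j : Fin n // Odd (j : ℕ)}} {i : Fin n} :
    FSrel n (source j) (path i) ↔ i = j :=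
  Iff.rfl

@[simp]
theorem not_rel_source_leaf (j : {j : Fin n // Odd (j : ℕ)}) : ¬ FSrel n (source j) leaf :=
  id

@[simp]
theorem not_leaf_rel (x : FSW n) : ¬ FSrel n leaf x := by
  cases x using cases <;> exact id

@[simp]
theorem not_rel_source (x : FSW n) (j : {j : Fin n // Odd (j : ℕ)}) :
    ¬ FSrel n x (source j) := by
  cases x using cases <;> exact id

/-- The grading of `F*_n` used for (Φ1), normalized so that `w_1` has level `0`. -/
def level : FSW n → ℤ
  | Sum.inl (Sum.inl i) => (i : ℕ)
  | Sum.inl (Sum.inr _) => 1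
  | Sum.inr j => ((j : Fin n) : ℕ) - 1

@[simp]
theorem level_path (i : Fin n) : level (path i) = (i : ℕ) :=
  rfl

@[simp]
theorem level_leaf : level (leaf : FSW n) = 1 :=
  rfl

@[simp]
theorem level_source (j : {j : Fin n // Odd (j : ℕ)}) :
    level (source j) = ((j : Fin n) : ℕ) - 1 :=
  rfl

theorem level_eq_of_rel (x y : FSW n) (hxy : FSrel n x y) : level y = level x + 1 := by
  cases x using cases <;> cases y using cases <;> simp_all

/-- Tells the worlds `w*_i` of `F*_n` apart from the worlds of `F_n`. -/
def isSource : FSW n → Bool :=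
  Sum.isRight

@[simp]
theorem isSource_path (i : Fin n) : isSource (path i) = false :=
  rfl

@[simp]
theorem isSource_source (j : {j : Fin n // Odd (j : ℕ)}) : isSource (source j) = true :=
  rfl

theorem injOn_isSource_predecessors (w : FSW n) : {x | FSrel n x w}.InjOn isSource := by
  intro x hx y hy hxy
  change FSrel n x w at hx
  change FSrel n y w at hy
  cases w using cases <;> cases x using cases <;> cases y using cases <;>
    simp_all [Fin.ext_iff, Subtype.ext_iff]

theorem exists_eq_path_of_rel_of_isSource {x w : FSW n} (hxw : FSrel n x w)
    (hx : isSource x = true) : ∃ i : Fin n, Odd (i : ℕ) ∧ w = path i := by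
  cases x using cases with
  | path i => simp at hx
  | leaf => exact absurd hxw (not_leaf_rel w)
  | source j =>
    cases w using cases with
    | path i => exact ⟨i, by simpa [rel_source_path.mp hxw] using j.2, rfl⟩
    | leaf => exact absurd hxw (not_rel_source_leaf j)
    | source k => exact absurd hxw (not_rel_source _ k)

theorem exists_eq_path_of_rel_of_rel {x y w : FSW n} (hne : x ≠ y) (hxw : FSrel n x w)
    (hyw : FSrel n y w) : ∃ i : Fin n, Odd (i : ℕ) ∧ w = path i := by
  have hsource : isSource x ≠ isSource y := (injOn_isSource_predecessors w).ne hxw hyw hne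
  cases hx : isSource x
  · exact exists_eq_path_of_rel_of_isSource hyw (by simpa [hx] using hsource)
  · exact exists_eq_path_of_rel_of_isSource hxw hx

theorem eq_path_of_rel_path_succ {i j : Fin n} (hi : Odd (i : ℕ)) (hj : (j : ℕ) = i + 1) {x : FSW n}
    (hx : FSrel n x (path j)) : x = path i := by
  cases x using cases with
  | path k => exact congrArg path (Fin.ext (by rw [rel_path_path] at hx; lia))
  | leaf => exact absurd hx (not_leaf_rel _)
  | source k =>
    have hk : Odd (j : ℕ) := by simpa [rel_source_path.mp hx] using k.2
    exact absurd hi.add_one (by simpa [hj] using hk)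

theorem phi1 : Phi1 (FSrel n) :=
  .of_grading level level_eq_of_rel

theorem path_zero_rel_iff (hn : 1 < n) (x : FSW n) :
    FSrel n (path ⟨0, by lia⟩) x ↔ x = leaf ∨ x = path ⟨1, hn⟩ := by
  cases x using cases with
  | path i => simp [Fin.ext_iff, (leaf_ne_path i).symm]
  | leaf => simp
  | source j => simpa using ⟨nofun, (path_ne_source _ j).symm⟩

theorem not_rel_path_zero (hn : 0 < n) (x : FSW n) : ¬ FSrel n x (path ⟨0, hn⟩) := by
  cases x using cases with
  | path i => simp
  | leaf => exact not_leaf_rel _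
  | source j => exact fun h => j.2.pos.ne (congrArg Fin.val (rel_source_path.mp h))

theorem eq_path_zero_of_rel_leaf (hn : 0 < n) (x : FSW n) (hx : FSrel n x leaf) :
    x = path ⟨0, hn⟩ := by
  cases x using cases <;> simp_all [Fin.ext_iff]

theorem phi2 (hn : 1 < n) : Phi2 (FSrel n) (path ⟨0, by lia⟩) :=
  ⟨leaf, path ⟨1, hn⟩, source ⟨⟨1, hn⟩, odd_one⟩, path_zero_rel_iff hn, leaf_ne_path _,
    rel_source_path.mpr rfl, not_exists.mpr (not_rel_path_zero _),
    not_exists.mpr fun x => not_rel_source x _, eq_path_zero_of_rel_leaf _,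
    not_exists.mpr not_leaf_rel, path_ne_source _ _⟩

theorem eq_of_rel_of_rel_of_ne_path_zero (hn : 0 < n) (x : FSW n) (hx : x ≠ path ⟨0, hn⟩)
    (y z : FSW n) (hxy : FSrel n x y) (hxz : FSrel n x z) : y = z := by
  cases x using cases <;> cases y using cases <;> cases z using cases <;>
    simp_all [Fin.ext_iff]

theorem phi3 (hn : 0 < n) : Phi3 (FSrel n) (path ⟨0, hn⟩) :=
  ⟨eq_of_rel_of_rel_of_ne_path_zero hn, fun w ⟨_, _, _, hxy, hyz, hxz, hx, hy, hz⟩ =>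
    not_pairwise_ne_of_injOn_bool (injOn_isSource_predecessors w) hx hy hz ⟨hxy, hyz, hxz⟩⟩

theorem add_one_lt_of_path_rel {i : Fin n} (hi : Odd (i : ℕ)) {x : FSW n}
    (hx : FSrel n (path i) x) : (i : ℕ) + 1 < n := by
  cases x using cases with
  | path j => exact rel_path_path.mp hx ▸ j.isLt
  | leaf => exact absurd (rel_path_leaf.mp hx) hi.pos.ne'
  | source j => exact absurd hx (not_rel_source _ j)

theorem phi4 (hn : Even n) : Phi4 (FSrel n) := by
  rintro w ⟨u, v, huv, huw, hvw⟩
  obtain ⟨i, hi, rfl⟩ := exists_eq_path_of_rel_of_rel huv huw hvw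
  refine or_iff_not_imp_left.mpr fun hsucc => ?_
  obtain ⟨s, hs⟩ := not_not.mp hsucc
  have hi₁ : (i : ℕ) + 1 < n := add_one_lt_of_path_rel hi hs
  have hodd : Odd ((i : ℕ) + 2) := hi.add_even even_two
  have hi₂ : (i : ℕ) + 2 < n :=
    lt_of_le_of_ne hi₁ fun h => Nat.not_even_iff_odd.mpr hodd (Eq.substr h hn)
  exact ⟨path ⟨i + 2, hi₂⟩, path ⟨i + 1, hi₁⟩, source ⟨⟨i + 2, hi₂⟩, hodd⟩, by simp, by simp,
    rel_source_path.mpr rfl, path_ne_source _ _, by simp [Fin.ext_iff],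
    fun _ => eq_path_of_rel_path_succ hi rfl, not_exists.mpr fun x => not_rel_source x _⟩

end FSW

theorem stmt12 (n : ℕ) (hn : 2 ≤ n) (hneven : Even n) :
    Phi1 (FSrel n) ∧
    Phi2 (FSrel n) (Sum.inl (Sum.inl (⟨0, by omega⟩ : Fin n))) ∧
    Phi3 (FSrel n) (Sum.inl (Sum.inl (⟨0, by omega⟩ : Fin n))) ∧
    Phi4 (FSrel n) :=
  ⟨FSW.phi1, FSW.phi2 hn, FSW.phi3 (by omega), FSW.phi4 hneven⟩
end

section
/- Let (W,R) be a frame with a distinguished world w₁ satisfying conditions (Φ1)–(Φ4), with witnesses w*, w₂, w₂* as in (Φ2). If u_1, …, u_k (k ≥ 2) are worlds of W such that u_1 = w₁, u_2 = w₂, u_i R u_{i+1} for all 1 ≤ i < k, and u_k has no R-successor, then k is even. -/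
/-- The body of condition (Φ2) at the distinguished world `w₁`,
with explicit witnesses `ws = w*`, `w₂`, `w₂s = w₂*`. -/
def Phi2With {W : Type*} (R : W → W → Prop) (w₁ ws w₂ w₂s : W) : Prop :=
  (∀ x, R w₁ x ↔ (x = ws ∨ x = w₂)) ∧ ws ≠ w₂ ∧
  R w₂s w₂ ∧ (¬ ∃ x, R x w₁) ∧ (¬ ∃ x, R x w₂s) ∧
  (∀ x, R x ws → x = w₁) ∧ (¬ ∃ x, R ws x) ∧ w₁ ≠ w₂s

/-! Call a world with two distinct predecessors a merge. By (Φ4), a merge that is not a dead end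
sees a world whose successor is again a merge. All worlds of the chain from `w₂` on have a
predecessor, hence at most one successor, so the chain itself runs through that world and that
merge. As `w₂` is a merge, every second world from `w₂` on is one, and a world directly after a
merge is never a dead end: the chain can only stop at a merge. -/

/-- A merge is a world with two distinct predecessors, the situation (Φ4) speaks about. -/
def IsMerge {W : Type*} (R : W → W → Prop) (w : W) : Prop :=
  {v | R v w}.Nontrivial

/-- Merges recur when every merge that is not a dead end reaches a merge in two steps. This is
the part of (Φ4) that determines the parity of chains. -/
def MergesRecur {W : Type*} (R : W → W → Prop) : Prop :=
  ∀ w, IsMerge R w → (∃ v, R w v) → ∃ y x, R w y ∧ R y x ∧ IsMerge R x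

section

variable {W : Type*} {R : W → W → Prop} {w₁ ws w₂ w₂s : W}

theorem Phi2With.isMerge (h : Phi2With R w₁ ws w₂ w₂s) : IsMerge R w₂ := by
  obtain ⟨hsucc, -, hw₂s, -, -, -, -, hne⟩ := h
  exact ⟨w₁, (hsucc w₂).2 (Or.inr rfl), w₂s, hw₂s, hne⟩

theorem Phi2With.ne_of_rel (h : Phi2With R w₁ ws w₂ w₂s) {v x : W} (hvx : R v x) : x ≠ w₁ := by
  obtain ⟨-, -, -, hroot, -⟩ := h
  rintro rfl
  exact hroot ⟨v, hvx⟩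

theorem Phi4.mergesRecur (h : Phi4 R) : MergesRecur R := by
  rintro w ⟨a, ha, b, hb, hab⟩ hlive
  obtain hdead | ⟨x, y, z, hwy, hyx, hzx, hyz, -⟩ := h w ⟨a, b, hab, ha, hb⟩
  · exact absurd hlive hdead
  · exact ⟨y, x, hwy, hyx, y, hyx, z, hzx, hyz⟩

theorem IsMerge.exists_isMerge_of_rel {w y : W} (hw : IsMerge R w) (hrecur : MergesRecur R)
    (huniq : ∀ v x y z, R v x → R x y → R x z → y = z) (hwy : R w y) :
    ∃ x, R y x ∧ IsMerge R x := by
  obtain ⟨v, hvw⟩ := hw.nonempty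
  obtain ⟨y', x, hwy', hyx, hx⟩ := hrecur w hw ⟨y, hwy⟩
  obtain rfl : y = y' := huniq v w y y' hvw hwy hwy'
  exact ⟨x, hyx, hx⟩

theorem IsMerge.even_of_chain {u : ℕ → W} {n : ℕ} (hmerge : IsMerge R (u 0))
    (hrecur : MergesRecur R) (huniq : ∀ v x y z, R v x → R x y → R x z → y = z)
    (hchain : ∀ i < n, R (u i) (u (i + 1))) (hdead : ¬ ∃ v, R (u n) v) : Even n := by
  induction n using Nat.twoStepInduction generalizing u with
  | zero => exact Even.zero
  | one =>
    obtain ⟨x, hx, -⟩ := hmerge.exists_isMerge_of_rel hrecur huniq (hchain 0 one_pos)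
    exact absurd ⟨x, hx⟩ hdead
  | more n ih _ =>
    have h01 : R (u 0) (u 1) := hchain 0 (by omega)
    have h12 : R (u 1) (u 2) := hchain 1 (by omega)
    obtain ⟨x, h1x, hx⟩ := hmerge.exists_isMerge_of_rel hrecur huniq h01
    obtain rfl : x = u 2 := huniq (u 0) (u 1) x (u 2) h01 h1x h12
    have hn : Even n :=
      ih (u := fun i => u (i + 2)) hx (fun i hi => hchain (i + 2) (by omega)) hdead
    exact hn.add even_two

theorem stmt13_general (hrecur : MergesRecur R)
    (huniq : ∀ v x y z, R v x → R x y → R x z → y = z)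
    {k : ℕ} (hk : 2 ≤ k) {u : ℕ → W} (hmerge : IsMerge R (u 1))
    (hchain : ∀ i, i + 1 < k → R (u i) (u (i + 1))) (hdead : ¬ ∃ v, R (u (k - 1)) v) :
    Even k := by
  obtain ⟨n, rfl⟩ := Nat.exists_eq_add_of_le' hk
  have hn : Even n := IsMerge.even_of_chain (u := fun i => u (i + 1)) hmerge hrecur huniq
    (fun i hi => hchain (i + 1) (by omega)) hdead
  exact hn.add even_two

end

theorem stmt13 {W : Type*} [Nonempty W] (R : W → W → Prop)
    (w₁ ws w₂ w₂s : W)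
    (h1 : Phi1 R) (h2 : Phi2With R w₁ ws w₂ w₂s) (h3 : Phi3 R w₁) (h4 : Phi4 R)
    (k : ℕ) (hk : 2 ≤ k) (u : ℕ → W)
    (hu0 : u 0 = w₁) (hu1 : u 1 = w₂)
    (hchain : ∀ i, i + 1 < k → R (u i) (u (i + 1)))
    (hlast : ¬ ∃ v, R (u (k - 1)) v) :
    Even k :=
  stmt13_general h4.mergesRecur (fun _ x y z hvx => h3.1 x (h2.ne_of_rel hvx) y z) hk
    (hu1 ▸ h2.isMerge) hchain hlast
end

section
/- For every integer d ≥ 1, every even integer n ≥ 2, and every world w of the frame F_n, there exist an even integer m with 2 ≤ m ≤ d + 3 and a world w' of the frame F_m such that the subframe of F_n induced on the set of worlds reachable from w in at most d R-steps is isomorphic to the subframe of F_m induced on the set of worlds reachable from w' in at most d R-steps, via an isomorphism sending w to w'. (The induced subframe on a set X of worlds has universe X and all R-pairs between elements of X; an isomorphism is a bijection preserving the relation in both directions.) -/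
/-- `Reach R d w v` : `v` is reachable from `w` in at most `d` `R`-steps. -/
def Reach {W : Type*} (R : W → W → Prop) (d : ℕ) (w v : W) : Prop :=
  ∃ k, k ≤ d ∧ pathRel R k w v

/-!
The worlds within `d` steps of `w` form a pointed frame of one of three shapes: a single point if
`w = w*`, a copy of `F_k` with `k = min n (d + 1)` if `w = w_1`, and otherwise a chain of `ℓ + 1`
worlds with `ℓ = min d (n - i)`, where `w = w_i`. So it suffices to realise the same shape in a
small even frame. For `w*` take `m = 2`; for `w_1` take `m = n` or an even `m ∈ {d + 1, d + 2}`;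
for the chain take an even `m ∈ {ℓ + 2, ℓ + 3}`, which leaves room for a world other than `w_1` at
distance `ℓ` from the end of `F_m`.
-/

section Reach

variable {W W' C : Type*} {R : W → W → Prop} {R' : W' → W' → Prop} {s : C → C → Prop}
  {d : ℕ} {w v : W} {w' : W'} {c : C}

theorem reach_zero_iff : Reach R 0 w v ↔ w = v := by
  simp [Reach, pathRel]

theorem reach_succ_iff : Reach R (d + 1) w v ↔ w = v ∨ ∃ u, R w u ∧ Reach R d u v := by
  constructor
  · rintro ⟨_ | k, hk, hpath⟩
    · exact .inl hpath
    · obtain ⟨u, hwu, huv⟩ := hpath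
      exact .inr ⟨u, hwu, k, by omega, huv⟩
  · rintro (rfl | ⟨u, hwu, k, hk, huv⟩)
    · exact ⟨0, by omega, rfl⟩
    · exact ⟨k + 1, by omega, u, hwu, huv⟩

/-- The pointed frame `(C, s, c)` is a model of the `d`-step neighbourhood of `w` in `(W, R)`: it is
isomorphic to the subframe of `(W, R)` induced on the worlds reachable from `w` in at most `d`
steps, pointed at `w`. -/
def IsReachModel (R : W → W → Prop) (d : ℕ) (w : W) (s : C → C → Prop) (c : C) : Prop :=
  ∃ e : s ≃r Subrel R (Reach R d w), (e c : W) = w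

theorem IsReachModel.of_relEmbedding (g : s ↪r R) (hc : g c = w)
    (hg : ∀ v, Reach R d w v ↔ ∃ a, g a = v) : IsReachModel R d w s c := by
  let f : s ↪r Subrel R (Reach R d w) :=
    ⟨⟨fun a => ⟨g a, (hg _).2 ⟨a, rfl⟩⟩, fun _ _ h => g.injective (congrArg Subtype.val h)⟩,
      g.map_rel_iff⟩
  have hf : Function.Surjective f := fun v => by
    obtain ⟨a, ha⟩ := (hg v).1 v.2
    exact ⟨a, Subtype.ext ha⟩
  exact ⟨RelIso.ofSurjective f hf, hc⟩

theorem IsReachModel.exists_equiv (hw : IsReachModel R d w s c) (hw' : IsReachModel R' d w' s c) :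
    ∃ e : {v // Reach R d w v} ≃ {v // Reach R' d w' v},
      (e ⟨w, ⟨0, Nat.zero_le d, rfl⟩⟩).1 = w' ∧ ∀ a b, R a.1 b.1 ↔ R' (e a).1 (e b).1 := by
  obtain ⟨e, he⟩ := hw
  obtain ⟨e', he'⟩ := hw'
  have hbase : e.symm ⟨w, ⟨0, Nat.zero_le d, rfl⟩⟩ = c :=
    e.symm_apply_eq.2 (Subtype.ext he.symm)
  refine ⟨(e.symm.trans e').toEquiv, ?_, fun a b => (e.symm.trans e').map_rel_iff.symm⟩
  change (e' (e.symm _)).1 = w'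
  rw [hbase, he']

end Reach

section Frame

variable {n k ℓ d : ℕ}

theorem reach_inr_iff {u : Unit} {v : Fin n ⊕ Unit} :
    Reach (Frel n) d (Sum.inr u) v ↔ v = Sum.inr u := by
  cases d <;> simp [reach_zero_iff, reach_succ_iff, Frel, eq_comm]

theorem reach_inl_inl_iff {i j : Fin n} :
    Reach (Frel n) d (Sum.inl i) (Sum.inl j) ↔ (i : ℕ) ≤ j ∧ (j : ℕ) ≤ i + d := by
  induction d generalizing i with
  | zero =>
    rw [reach_zero_iff, Sum.inl.injEq, Fin.ext_iff]
    omega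
  | succ d ih =>
    simp only [reach_succ_iff, Sum.exists, ih, Frel, Sum.inl.injEq, Fin.ext_iff, reach_inr_iff,
      reduceCtorEq, and_false, exists_false, or_false]
    constructor
    · rintro (hij | ⟨u, hu, huj⟩) <;> omega
    · intro h
      rcases h.1.eq_or_lt with hij | hij
      · exact .inl hij
      · exact .inr ⟨⟨i + 1, by omega⟩, rfl, by dsimp only; omega⟩

theorem reach_inl_inr_iff {i : Fin n} :
    Reach (Frel n) d (Sum.inl i) (Sum.inr ()) ↔ (i : ℕ) = 0 ∧ 1 ≤ d := by
  induction d generalizing i with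
  | zero => simp [reach_zero_iff]
  | succ d ih =>
    simp only [reach_succ_iff, Sum.exists, ih, Frel, reach_inr_iff, reduceCtorEq, false_or]
    constructor
    · rintro (⟨u, hu, hu0, -⟩ | ⟨-, hi, -⟩) <;> omega
    · exact fun h => .inr ⟨(), h.1, trivial⟩

/-- The inclusion of `F_k` as an initial segment of `F_n`, fixing `w*`. -/
def frelCastLE (h : k ≤ n) : Frel k ↪r Frel n where
  toFun := Sum.map (Fin.castLE h) id
  inj' := (Fin.castLE_injective h).sumMap Function.injective_id
  map_rel_iff' := by rintro (i | _) (j | _) <;> rfl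

/-- The finite chain on `k` worlds, in which each world sees exactly its immediate successor. -/
def chainRel (k : ℕ) (i j : Fin k) : Prop := (j : ℕ) = i + 1

/-- The copy of the chain on `k` worlds inside `F_n` that starts at `w_{i+1}`. -/
def chainShift (i : ℕ) (h : i + k ≤ n) : chainRel k ↪r Frel n where
  toFun j := Sum.inl ⟨i + j, by omega⟩
  inj' j j' hj := by simpa [Fin.ext_iff] using hj
  map_rel_iff' {j j'} := by
    change i + (j' : ℕ) = i + j + 1 ↔ (j' : ℕ) = j + 1
    omega

theorem isReachModel_star :
    IsReachModel (Frel n) d (Sum.inr ()) (emptyRelation : Unit → Unit → Prop) () :=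
  .of_relEmbedding ⟨.inr, Iff.rfl⟩ rfl fun v => by
    rw [reach_inr_iff]
    exact ⟨fun hv => ⟨(), hv.symm⟩, fun ⟨_, hv⟩ => hv.symm⟩

theorem isReachModel_root (hd : 1 ≤ d) (hn : 0 < n) (hk : min n (d + 1) = k) :
    IsReachModel (Frel n) d (Sum.inl ⟨0, hn⟩) (Frel k) (Sum.inl ⟨0, by omega⟩) := by
  refine .of_relEmbedding (frelCastLE (by omega)) rfl ?_
  rintro (j | _)
  · rw [reach_inl_inl_iff]
    constructor
    · intro hj
      exact ⟨Sum.inl ⟨j, by dsimp only at hj; omega⟩, rfl⟩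
    · rintro ⟨a | _, ha⟩
      · obtain rfl : Fin.castLE _ a = j := Sum.inl.inj ha
        simp only [Fin.val_castLE]
        omega
      · cases ha
  · exact iff_of_true (reach_inl_inr_iff.2 ⟨rfl, hd⟩) ⟨Sum.inr (), rfl⟩

theorem isReachModel_chain {i : Fin n} (hi : 0 < (i : ℕ)) (hℓ : min d (i.rev : ℕ) = ℓ) :
    IsReachModel (Frel n) d (Sum.inl i) (chainRel (ℓ + 1)) 0 := by
  rw [Fin.val_rev] at hℓ
  refine .of_relEmbedding (chainShift i (by omega)) rfl ?_
  rintro (j | _)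
  · rw [reach_inl_inl_iff]
    constructor
    · intro hj
      exact ⟨⟨j - i, by omega⟩, congrArg Sum.inl (Fin.ext (Nat.add_sub_cancel' hj.1))⟩
    · rintro ⟨a, ha⟩
      have haj : (i : ℕ) + a = j := congrArg Fin.val (Sum.inl.inj ha)
      omega
  · exact iff_of_false (fun h => hi.ne' (reach_inl_inr_iff.1 h).1) fun ⟨_, ha⟩ => by cases ha

end Frame

theorem exists_even_mem_Icc (k : ℕ) : ∃ m ∈ Set.Icc k (k + 1), Even m := by
  rcases k.even_or_odd with hk | hk
  · exact ⟨k, ⟨le_rfl, k.le_succ⟩, hk⟩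
  · exact ⟨k + 1, ⟨k.le_succ, le_rfl⟩, hk.add_one⟩

theorem exists_even_le_min_eq {n : ℕ} (hn : Even n) (k : ℕ) :
    ∃ m ≤ k + 1, Even m ∧ min m k = min n k := by
  rcases le_total n k with hnk | hkn
  · exact ⟨n, hnk.trans k.le_succ, hn, rfl⟩
  · obtain ⟨m, ⟨hkm, hmk⟩, hm⟩ := exists_even_mem_Icc k
    exact ⟨m, hmk, hm, by rw [min_eq_right hkm, min_eq_right hkn]⟩

theorem stmt14 (d : ℕ) (hd : 1 ≤ d) (n : ℕ) (hn : 2 ≤ n) (hneven : Even n)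
    (w : Fin n ⊕ Unit) :
    ∃ m : ℕ, 2 ≤ m ∧ m ≤ d + 3 ∧ Even m ∧
      ∃ w' : Fin m ⊕ Unit,
        -- an isomorphism between the subframes induced on the worlds reachable
        -- in at most `d` steps from `w` (in `F_n`) and from `w'` (in `F_m`)
        ∃ e : {v : Fin n ⊕ Unit // Reach (Frel n) d w v} ≃
              {v : Fin m ⊕ Unit // Reach (Frel m) d w' v},
          (e ⟨w, ⟨0, Nat.zero_le d, rfl⟩⟩).1 = w' ∧
          ∀ a b : {v : Fin n ⊕ Unit // Reach (Frel n) d w v},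
            Frel n a.1 b.1 ↔ Frel m (e a).1 (e b).1 := by
  rcases w with ⟨i, hi⟩ | _
  · rcases i.eq_zero_or_pos with rfl | hpos
    · obtain ⟨m, hmd, hm, hmin⟩ := exists_even_le_min_eq hneven (d + 1)
      exact ⟨m, by omega, by omega, hm, _,
        (isReachModel_root hd hi rfl).exists_equiv (isReachModel_root hd (by omega) hmin)⟩
    · obtain ⟨ℓ, hℓ⟩ : ∃ ℓ, min d (Fin.rev ⟨i, hi⟩ : ℕ) = ℓ := ⟨_, rfl⟩
      have hℓd : ℓ ≤ d := hℓ ▸ min_le_left _ _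
      obtain ⟨m, ⟨hℓm, hmℓ⟩, hm⟩ := exists_even_mem_Icc (ℓ + 2)
      let w' : Fin m := Fin.rev ⟨ℓ, by omega⟩
      have hw' : 0 < (w' : ℕ) := Nat.sub_pos_of_lt hℓm
      have hℓ' : min d (w'.rev : ℕ) = ℓ := by rw [Fin.rev_rev, min_eq_right hℓd]
      exact ⟨m, by omega, by omega, hm, _,
        (isReachModel_chain hpos hℓ).exists_equiv (isReachModel_chain hw' hℓ')⟩
  · exact ⟨2, le_rfl, by omega, even_two, _, isReachModel_star.exists_equiv isReachModel_star⟩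
end
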